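/- Let ε > 0 be a real number and N ≥ 1 an integer, and define δ(ε, N) := ε⁴ / (16 N⁸ n⁴). Let Λ ∈ ℝ^{p×p} be a connected discrete-time interconnection, r ∈ ℝ^p satisfy r^T Λ = r^T and r^T 1 = 1, and Ω ∈ ℝ^{p×p} be symmetric positive definite with (Λ − 1 r^T)^T Ω (Λ − 1 r^T) − Ω = −I_p. Define ρ(Λ) := σ_max(Ω) · max{1, |Λ − I_p|²} and V(x) := x^T (Ω ⊗ I_n) x. Then for every Q : ℕ → Q̄_n with σ_min(Σ_{k=0}^{N−1} Q_k) ≥ ε, the solution of x(k+1) = (I_{np} + (Λ − I_p) ⊗ Q_k) x(k) satisfies V(x(N) − x̄) ≤ (1 − δ(ε,N)/ρ(Λ)) · V(x(0) − x̄), where x̄ := (1 r^T ⊗ I_n) x(0). -/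

import Mathlib

open Matrix Filter
open scoped Kronecker

noncomputable section

/-- Euclidean norm of a vector. -/
def eunorm {ι : Type*} [Fintype ι] (v : ι → ℝ) : ℝ := Real.sqrt (∑ i, v i ^ 2)

/-- Spectral (induced 2-) norm of a matrix. -/
def specNorm {m n : Type*} [Fintype m] [Fintype n] (M : Matrix m n ℝ) : ℝ :=
  sSup {c : ℝ | ∃ v : n → ℝ, eunorm v ≤ 1 ∧ c = eunorm (M.mulVec v)}

/-- Smallest singular value of a matrix. -/
def sigmaMin {m n : Type*} [Fintype m] [Fintype n] (M : Matrix m n ℝ) : ℝ :=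
  sInf {c : ℝ | ∃ v : n → ℝ, eunorm v = 1 ∧ c = eunorm (M.mulVec v)}

/-- Largest singular value of a matrix. -/
def sigmaMax {m n : Type*} [Fintype m] [Fintype n] (M : Matrix m n ℝ) : ℝ :=
  sSup {c : ℝ | ∃ v : n → ℝ, eunorm v = 1 ∧ c = eunorm (M.mulVec v)}

/-- A discrete-time interconnection matrix: entrywise nonnegative and row-stochastic. -/
def IsInterconnectionDT {p : ℕ} (Λ : Matrix (Fin p) (Fin p) ℝ) : Prop :=
  (∀ i j, 0 ≤ Λ i j) ∧ ∀ i, ∑ j, Λ i j = 1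

/-- Connectedness of the graph of a matrix (edge `(i,j)` iff the `(i,j)` entry is positive):
there is a node to which there is a directed path from every other node. -/
def ConnectedMat {p : ℕ} (Λ : Matrix (Fin p) (Fin p) ℝ) : Prop :=
  ∃ v : Fin p, ∀ u : Fin p, Relation.ReflTransGen (fun i j => 0 < Λ i j) u v

/-- Membership in `Q̄_n`: symmetric positive semidefinite with spectral norm at most 1. -/
def InQbar {n : ℕ} (R : Matrix (Fin n) (Fin n) ℝ) : Prop :=
  R.PosSemidef ∧ specNorm R ≤ 1

/-- `δ(ε, N) = ε⁴/(16 N⁸ n⁴)` (discrete time). -/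
def deltaDT (n : ℕ) (ε : ℝ) (N : ℕ) : ℝ := ε ^ 4 / (16 * (N : ℝ) ^ 8 * (n : ℝ) ^ 4)

/-- Sufficient excitation for `Q : ℕ → Q_n` (discrete-time sense). -/
def SuffExcitingDT {n : ℕ} (Q : ℕ → Matrix (Fin n) (Fin n) ℝ) : Prop :=
  ∃ (ε : ℕ → ℝ) (N : ℕ → ℕ), (∀ i, 0 < ε i) ∧ (∀ i, 1 ≤ N i) ∧
    (∀ i, ε i ≤ sigmaMin (∑ k ∈ Finset.Ico (∑ j ∈ Finset.range i, N j)
      ((∑ j ∈ Finset.range i, N j) + N i), Q k)) ∧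
    Tendsto (fun M => ∑ i ∈ Finset.range M, deltaDT n (ε i) (N i)) atTop atTop

/-- Persistence of excitation for `Q : ℕ → Q_n` (discrete-time sense). -/
def PersExcitingDT {n : ℕ} (Q : ℕ → Matrix (Fin n) (Fin n) ℝ) : Prop :=
  ∃ (ε : ℝ) (N : ℕ), 0 < ε ∧ 1 ≤ N ∧ ∀ k₀ : ℕ,
    ε ≤ sigmaMin (∑ k ∈ Finset.Ico k₀ (k₀ + N), Q k)

/-!
Stack the agents' states as the columns of a matrix `X`, so that `(B ⊗ C) vec X = vec (C X Bᵀ)`,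
and factor `Q k = (R k)ᵀ R k` and `Ω = Sᵀ S`. Then `V` is a squared Frobenius norm `‖X Sᵀ‖²`, and
since `R k` is a contraction the Lyapunov equation makes it drop by at least `‖R k X‖²` per step.

If all these drops are small, then `X` barely moves, as each increment factors through `R k X`; so
all `R k X 0` are small, and excitation, a lower bound on `∑ (R k)ᵀ R k`, forces `X 0` itself to be
small. Quantitatively, the total drop is at least a fixed fraction of `‖X 0‖²`.
-/

section SpectralNorm

open scoped Matrix.Norms.L2Operator

variable {m n : Type*} [Fintype m] [Fintype n]

lemma eunorm_eq_norm_toLp (v : n → ℝ) : eunorm v = ‖WithLp.toLp 2 v‖ := by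
  simp [eunorm, EuclideanSpace.norm_eq]

lemma setOf_eunorm_mulVec_eq_image [DecidableEq n] (M : Matrix m n ℝ) (P : ℝ → Prop) :
    {c : ℝ | ∃ v : n → ℝ, P (eunorm v) ∧ c = eunorm (M *ᵥ v)}
      = (fun x => ‖(toEuclideanLin M).toContinuousLinearMap x‖) '' {x | P ‖x‖} := by
  ext c
  constructor
  · rintro ⟨v, hv, rfl⟩
    exact ⟨.toLp 2 v, by rwa [Set.mem_ofPred_eq, ← eunorm_eq_norm_toLp],
      (eunorm_eq_norm_toLp (M *ᵥ v)).symm⟩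
  · rintro ⟨x, hx, rfl⟩
    exact ⟨x.ofLp, by rwa [eunorm_eq_norm_toLp], (eunorm_eq_norm_toLp (M *ᵥ x.ofLp)).symm⟩

lemma specNorm_eq_l2_opNorm [DecidableEq n] (M : Matrix m n ℝ) : specNorm M = ‖M‖ := by
  have hball : {x : EuclideanSpace ℝ n | ‖x‖ ≤ 1} = Metric.closedBall 0 1 :=
    Set.ext fun _ => mem_closedBall_zero_iff.symm
  rw [specNorm, setOf_eunorm_mulVec_eq_image M (· ≤ 1), hball,
    ContinuousLinearMap.sSup_unitClosedBall_eq_norm, l2_opNorm_def]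
  rfl

lemma sigmaMax_eq_specNorm (M : Matrix m n ℝ) : sigmaMax M = specNorm M := by
  classical
  have hsphere : {x : EuclideanSpace ℝ n | ‖x‖ = 1} = Metric.sphere 0 1 :=
    Set.ext fun _ => mem_sphere_zero_iff_norm.symm
  rw [sigmaMax, setOf_eunorm_mulVec_eq_image M (· = 1), hsphere,
    ContinuousLinearMap.sSup_sphere_eq_norm, specNorm_eq_l2_opNorm, l2_opNorm_def]
  rfl

lemma specNorm_nonneg (M : Matrix m n ℝ) : 0 ≤ specNorm M := by
  classical
  rw [specNorm_eq_l2_opNorm]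
  exact norm_nonneg M

lemma sigmaMax_nonneg (M : Matrix m n ℝ) : 0 ≤ sigmaMax M :=
  sigmaMax_eq_specNorm M ▸ specNorm_nonneg M

lemma specNorm_transpose (M : Matrix m n ℝ) : specNorm Mᵀ = specNorm M := by
  classical
  rw [specNorm_eq_l2_opNorm, specNorm_eq_l2_opNorm, ← conjTranspose_eq_transpose_of_trivial,
    l2_opNorm_conjTranspose]

lemma specNorm_transpose_mul_self (M : Matrix m n ℝ) : specNorm (Mᵀ * M) = specNorm M ^ 2 := by
  classical
  rw [specNorm_eq_l2_opNorm, specNorm_eq_l2_opNorm, ← conjTranspose_eq_transpose_of_trivial,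
    l2_opNorm_conjTranspose_mul_self, sq]

lemma specNorm_sum_le {ι : Type*} (s : Finset ι) (M : ι → Matrix m n ℝ) :
    specNorm (∑ i ∈ s, M i) ≤ ∑ i ∈ s, specNorm (M i) := by
  classical
  simp only [specNorm_eq_l2_opNorm]
  exact norm_sum_le s M

lemma eunorm_mulVec_le (M : Matrix m n ℝ) (v : n → ℝ) :
    eunorm (M *ᵥ v) ≤ specNorm M * eunorm v := by
  classical
  rw [specNorm_eq_l2_opNorm, eunorm_eq_norm_toLp, eunorm_eq_norm_toLp]
  exact l2_opNorm_mulVec M (.toLp 2 v)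

lemma eunorm_smul (c : ℝ) (v : n → ℝ) : eunorm (c • v) = |c| * eunorm v := by
  simp only [eunorm_eq_norm_toLp, WithLp.toLp_smul, norm_smul, Real.norm_eq_abs]

lemma eunorm_nonneg (v : n → ℝ) : 0 ≤ eunorm v := Real.sqrt_nonneg _

lemma sigmaMin_nonneg (M : Matrix m n ℝ) : 0 ≤ sigmaMin M :=
  Real.sInf_nonneg fun _ ⟨_, _, hc⟩ => hc ▸ eunorm_nonneg _

lemma sigmaMin_le_eunorm_mulVec (M : Matrix m n ℝ) {v : n → ℝ} (hv : eunorm v = 1) :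
    sigmaMin M ≤ eunorm (M *ᵥ v) :=
  csInf_le ⟨0, fun _ ⟨_, _, hc⟩ => hc ▸ eunorm_nonneg _⟩ ⟨v, hv, rfl⟩

lemma sigmaMin_mul_eunorm_le (M : Matrix m n ℝ) (v : n → ℝ) :
    sigmaMin M * eunorm v ≤ eunorm (M *ᵥ v) := by
  rcases (eunorm_nonneg v).eq_or_lt with h | h
  · simpa only [← h, mul_zero] using eunorm_nonneg _
  have hinv : |(eunorm v)⁻¹| = (eunorm v)⁻¹ := abs_of_pos (inv_pos.2 h)
  have hunit : eunorm ((eunorm v)⁻¹ • v) = 1 := by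
    rw [eunorm_smul, hinv, inv_mul_cancel₀ h.ne']
  have hle := sigmaMin_le_eunorm_mulVec M hunit
  rwa [mulVec_smul, eunorm_smul, hinv, le_inv_mul_iff₀ h, mul_comm] at hle

lemma sigmaMin_le_specNorm [Nonempty n] (M : Matrix m n ℝ) : sigmaMin M ≤ specNorm M := by
  classical
  obtain ⟨j⟩ := ‹Nonempty n›
  have hunit : eunorm (Pi.single j (1 : ℝ)) = 1 := by simp [eunorm_eq_norm_toLp]
  simpa only [hunit, mul_one] using
    (sigmaMin_le_eunorm_mulVec M hunit).trans (eunorm_mulVec_le M _)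

lemma specNorm_le_one_of_transpose_mul_self {R : Matrix m n ℝ} (h : specNorm (Rᵀ * R) ≤ 1) :
    specNorm R ≤ 1 := by
  rw [specNorm_transpose_mul_self] at h
  exact (sq_le_one_iff₀ (specNorm_nonneg R)).1 h

lemma exists_eq_transpose_mul_self_of_posSemidef {M : Matrix n n ℝ} (hM : M.PosSemidef) :
    ∃ S : Matrix n n ℝ, M = Sᵀ * S := by
  classical
  open scoped MatrixOrder in
  simpa only [star_eq_conjTranspose, conjTranspose_eq_transpose_of_trivial] using
    CStarAlgebra.nonneg_iff_eq_star_mul_self.1 hM.nonneg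

end SpectralNorm

section FrobeniusNorm

open scoped Matrix.Norms.Frobenius

variable {l m n p : Type*} [Fintype l] [Fintype m] [Fintype n] [Fintype p]

lemma frobenius_norm_sq_eq_trace (Z : Matrix m n ℝ) : ‖Z‖ ^ 2 = (Zᵀ * Z).trace := by
  rw [frobenius_norm_def, ← Real.sqrt_eq_rpow, Real.sq_sqrt (by positivity), trace,
    Finset.sum_comm]
  simp [mul_apply, pow_two]

lemma frobenius_norm_sq_eq_sum_col (Z : Matrix m n ℝ) :
    ‖Z‖ ^ 2 = ∑ j, eunorm (Z.col j) ^ 2 := by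
  rw [frobenius_norm_sq_eq_trace]
  refine Finset.sum_congr rfl fun j _ => ?_
  rw [eunorm, Real.sq_sqrt (Finset.sum_nonneg fun _ _ => sq_nonneg _)]
  exact Finset.sum_congr rfl fun i _ => (pow_two _).symm

lemma frobenius_norm_add_sq (X Y : Matrix m n ℝ) :
    ‖X + Y‖ ^ 2 = ‖X‖ ^ 2 + 2 * (Xᵀ * Y).trace + ‖Y‖ ^ 2 := by
  have hsymm : (Yᵀ * X).trace = (Xᵀ * Y).trace := by
    rw [← trace_transpose, transpose_mul, transpose_transpose]
  simp only [frobenius_norm_sq_eq_trace, transpose_add, Matrix.add_mul, Matrix.mul_add, trace_add,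
    hsymm]
  ring

lemma frobenius_norm_mul_le_specNorm_mul (M : Matrix l m ℝ) (Z : Matrix m n ℝ) :
    ‖M * Z‖ ≤ specNorm M * ‖Z‖ := by
  refine le_of_sq_le_sq ?_ (mul_nonneg (specNorm_nonneg M) (norm_nonneg Z))
  rw [mul_pow, frobenius_norm_sq_eq_sum_col, frobenius_norm_sq_eq_sum_col, Finset.mul_sum]
  refine Finset.sum_le_sum fun j _ => ?_
  rw [← mul_pow]
  exact pow_le_pow_left₀ (eunorm_nonneg _) (eunorm_mulVec_le M (Z.col j)) 2

lemma frobenius_norm_mul_le_mul_specNorm (Z : Matrix l m ℝ) (M : Matrix m n ℝ) :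
    ‖Z * M‖ ≤ ‖Z‖ * specNorm M := by
  rw [← frobenius_norm_transpose, transpose_mul, ← frobenius_norm_transpose Z,
    ← specNorm_transpose, mul_comm]
  exact frobenius_norm_mul_le_specNorm_mul Mᵀ Zᵀ

lemma sigmaMin_mul_frobenius_norm_le (M : Matrix l m ℝ) (Z : Matrix m n ℝ) :
    sigmaMin M * ‖Z‖ ≤ ‖M * Z‖ := by
  refine le_of_sq_le_sq ?_ (norm_nonneg _)
  rw [mul_pow, frobenius_norm_sq_eq_sum_col, frobenius_norm_sq_eq_sum_col, Finset.mul_sum]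
  refine Finset.sum_le_sum fun j _ => ?_
  rw [← mul_pow]
  exact pow_le_pow_left₀ (mul_nonneg (sigmaMin_nonneg M) (eunorm_nonneg _))
    (sigmaMin_mul_eunorm_le M (Z.col j)) 2

lemma frobenius_norm_mul_le_of_specNorm_le_one {M : Matrix l m ℝ} (hM : specNorm M ≤ 1)
    (Z : Matrix m n ℝ) : ‖M * Z‖ ≤ ‖Z‖ :=
  (frobenius_norm_mul_le_specNorm_mul M Z).trans (mul_le_of_le_one_left (norm_nonneg Z) hM)

lemma frobenius_norm_mul_transpose_sq_le_sigmaMax (S : Matrix m p ℝ) (X : Matrix n p ℝ) :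
    ‖X * Sᵀ‖ ^ 2 ≤ sigmaMax (Sᵀ * S) * ‖X‖ ^ 2 := by
  rw [sigmaMax_eq_specNorm, specNorm_transpose_mul_self, ← specNorm_transpose, ← mul_pow, mul_comm]
  gcongr
  exact frobenius_norm_mul_le_mul_specNorm X Sᵀ

lemma dotProduct_kronecker_one_mulVec_vec [DecidableEq n] (S : Matrix m p ℝ) (X : Matrix n p ℝ) :
    vec X ⬝ᵥ (((Sᵀ * S) ⊗ₖ (1 : Matrix n n ℝ)) *ᵥ vec X) = ‖X * Sᵀ‖ ^ 2 := by
  rw [kronecker_mulVec_vec, Matrix.one_mul, transpose_mul, transpose_transpose, vec_dotProduct_vec,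
    ← Matrix.mul_assoc, ← Matrix.mul_assoc, trace_mul_comm, frobenius_norm_sq_eq_trace,
    transpose_mul, transpose_transpose]
  simp only [Matrix.mul_assoc]

lemma sigmaMin_mul_le_sum_frobenius_norm {R : ℕ → Matrix l n ℝ} (hR : ∀ k, specNorm (R k) ≤ 1)
    (N : ℕ) (Z : Matrix n p ℝ) :
    sigmaMin (∑ k ∈ Finset.range N, (R k)ᵀ * R k) * ‖Z‖
      ≤ ∑ k ∈ Finset.range N, ‖R k * Z‖ := by
  refine (sigmaMin_mul_frobenius_norm_le _ Z).trans ?_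
  rw [Matrix.sum_mul]
  refine (norm_sum_le _ _).trans (Finset.sum_le_sum fun k _ => ?_)
  rw [Matrix.mul_assoc]
  exact frobenius_norm_mul_le_of_specNorm_le_one ((specNorm_transpose _).trans_le (hR k)) _

lemma frobenius_norm_sub_initial_le {R : ℕ → Matrix l n ℝ} (hR : ∀ k, specNorm (R k) ≤ 1)
    {B : Matrix p p ℝ} {X : ℕ → Matrix n p ℝ}
    (hX : ∀ k, X (k + 1) = X k + (R k)ᵀ * R k * X k * Bᵀ) (k : ℕ) :
    ‖X k - X 0‖ ≤ specNorm B * ∑ j ∈ Finset.range k, ‖R j * X j‖ := by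
  have hstep (j : ℕ) : ‖X (j + 1) - X j‖ ≤ specNorm B * ‖R j * X j‖ := by
    rw [hX j, add_sub_cancel_left, Matrix.mul_assoc, Matrix.mul_assoc, ← Matrix.mul_assoc (R j),
      mul_comm, ← specNorm_transpose B]
    exact (frobenius_norm_mul_le_of_specNorm_le_one
      ((specNorm_transpose _).trans_le (hR j)) _).trans (frobenius_norm_mul_le_mul_specNorm _ _)
  rw [← Finset.sum_range_sub, Finset.mul_sum]
  exact (norm_sum_le _ _).trans (Finset.sum_le_sum fun j _ => hstep j)

lemma frobenius_norm_mul_initial_le {R : ℕ → Matrix l n ℝ} (hR : ∀ k, specNorm (R k) ≤ 1)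
    {B : Matrix p p ℝ} {X : ℕ → Matrix n p ℝ}
    (hX : ∀ k, X (k + 1) = X k + (R k)ᵀ * R k * X k * Bᵀ) {k N : ℕ} (hk : k < N) :
    ‖R k * X 0‖ ≤ max 1 (specNorm B) * ∑ j ∈ Finset.range N, ‖R j * X j‖ := by
  have hmono : ∑ j ∈ Finset.range (k + 1), ‖R j * X j‖ ≤ ∑ j ∈ Finset.range N, ‖R j * X j‖ :=
    Finset.sum_le_sum_of_subset_of_nonneg (Finset.range_subset_range.2 hk)
      fun _ _ _ => norm_nonneg _
  calc ‖R k * X 0‖ = ‖R k * X k - R k * (X k - X 0)‖ := by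
        rw [← Matrix.mul_sub, sub_sub_cancel]
    _ ≤ ‖R k * X k‖ + ‖X k - X 0‖ :=
        (norm_sub_le _ _).trans
          (add_le_add_right (frobenius_norm_mul_le_of_specNorm_le_one (hR k) _) _)
    _ ≤ 1 * ‖R k * X k‖ + specNorm B * ∑ j ∈ Finset.range k, ‖R j * X j‖ := by
        rw [one_mul]
        gcongr
        exact frobenius_norm_sub_initial_le hR hX k
    _ ≤ max 1 (specNorm B) * ‖R k * X k‖
          + max 1 (specNorm B) * ∑ j ∈ Finset.range k, ‖R j * X j‖ := by
        gcongr
        exacts [le_max_left _ _, le_max_right _ _]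
    _ = max 1 (specNorm B) * ∑ j ∈ Finset.range (k + 1), ‖R j * X j‖ := by
        rw [Finset.sum_range_succ, mul_add, add_comm]
    _ ≤ max 1 (specNorm B) * ∑ j ∈ Finset.range N, ‖R j * X j‖ := by gcongr

lemma sq_sigmaMin_mul_le_sum_sq {R : ℕ → Matrix l n ℝ} (hR : ∀ k, specNorm (R k) ≤ 1)
    {B : Matrix p p ℝ} {X : ℕ → Matrix n p ℝ}
    (hX : ∀ k, X (k + 1) = X k + (R k)ᵀ * R k * X k * Bᵀ) (N : ℕ) :
    sigmaMin (∑ k ∈ Finset.range N, (R k)ᵀ * R k) ^ 2 * ‖X 0‖ ^ 2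
      ≤ N ^ 3 * (max 1 (specNorm B ^ 2) * ∑ k ∈ Finset.range N, ‖R k * X k‖ ^ 2) := by
  set σ := sigmaMin (∑ k ∈ Finset.range N, (R k)ᵀ * R k)
  set c := max 1 (specNorm B)
  have hlin : σ * ‖X 0‖ ≤ N * (c * ∑ k ∈ Finset.range N, ‖R k * X k‖) := by
    refine (sigmaMin_mul_le_sum_frobenius_norm hR N (X 0)).trans ?_
    simpa only [Finset.card_range, nsmul_eq_mul] using Finset.sum_le_card_nsmul _ _ _
      fun k hk => frobenius_norm_mul_initial_le hR hX (Finset.mem_range.1 hk)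
  have hcauchy : (∑ k ∈ Finset.range N, ‖R k * X k‖) ^ 2
      ≤ N * ∑ k ∈ Finset.range N, ‖R k * X k‖ ^ 2 := by
    simpa only [Finset.card_range] using sq_sum_le_card_mul_sum_sq (s := Finset.range N)
  have hc : max 1 (specNorm B ^ 2) = c ^ 2 := by
    simpa only [one_pow] using (pow_left_monotoneOn (n := 2)).map_max
      (Set.mem_ofPred.2 (zero_le_one' ℝ)) (Set.mem_ofPred.2 (specNorm_nonneg B)) |>.symm
  calc σ ^ 2 * ‖X 0‖ ^ 2 = (σ * ‖X 0‖) ^ 2 := (mul_pow _ _ _).symm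
    _ ≤ (N * (c * ∑ k ∈ Finset.range N, ‖R k * X k‖)) ^ 2 :=
        pow_le_pow_left₀ (mul_nonneg (sigmaMin_nonneg _) (norm_nonneg _)) hlin 2
    _ = N ^ 2 * c ^ 2 * (∑ k ∈ Finset.range N, ‖R k * X k‖) ^ 2 := by ring
    _ ≤ N ^ 2 * c ^ 2 * (N * ∑ k ∈ Finset.range N, ‖R k * X k‖ ^ 2) := by gcongr
    _ = N ^ 3 * (max 1 (specNorm B ^ 2) * ∑ k ∈ Finset.range N, ‖R k * X k‖ ^ 2) := by
        rw [hc]; ring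

lemma frobenius_norm_add_transpose_mul_sq_le {R : Matrix l m ℝ} (hR : specNorm R ≤ 1)
    (U : Matrix m n ℝ) (W : Matrix l n ℝ) :
    ‖U + Rᵀ * W‖ ^ 2 ≤ ‖U‖ ^ 2 + ‖R * U + W‖ ^ 2 - ‖R * U‖ ^ 2 := by
  have hcontr : ‖Rᵀ * W‖ ^ 2 ≤ ‖W‖ ^ 2 := by
    gcongr
    exact frobenius_norm_mul_le_of_specNorm_le_one ((specNorm_transpose R).trans_le hR) W
  have hcross : Uᵀ * (Rᵀ * W) = (R * U)ᵀ * W := by rw [transpose_mul, Matrix.mul_assoc]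
  rw [frobenius_norm_add_sq, frobenius_norm_add_sq, hcross]
  linarith

variable [DecidableEq p]

lemma frobenius_norm_sq_of_lyapunov {A : Matrix p p ℝ} {S : Matrix m p ℝ}
    (hA : Aᵀ * (Sᵀ * S) * A - Sᵀ * S = -1) (Y : Matrix n p ℝ) :
    ‖Y * Aᵀ * Sᵀ‖ ^ 2 = ‖Y * Sᵀ‖ ^ 2 - ‖Y‖ ^ 2 := by
  have htrace (M : Matrix p p ℝ) (T : Matrix m p ℝ) (hM : Tᵀ * T = M) :
      ‖Y * Tᵀ‖ ^ 2 = (Y * M * Yᵀ).trace := by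
    rw [← frobenius_norm_transpose, frobenius_norm_sq_eq_trace, transpose_transpose, transpose_mul,
      transpose_transpose, ← hM]
    simp only [Matrix.mul_assoc]
  have hAS : (S * A)ᵀ * (S * A) = Sᵀ * S - 1 := by
    rw [transpose_mul, sub_eq_add_neg, ← hA, add_sub_cancel]
    simp only [Matrix.mul_assoc]
  rw [Matrix.mul_assoc, ← transpose_mul, htrace _ _ hAS, htrace _ _ rfl, Matrix.mul_sub,
    Matrix.sub_mul, trace_sub, Matrix.mul_one, ← frobenius_norm_transpose Y,
    frobenius_norm_sq_eq_trace Yᵀ, transpose_transpose]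

lemma lyapunov_step {A : Matrix p p ℝ} {S : Matrix m p ℝ}
    (hA : Aᵀ * (Sᵀ * S) * A - Sᵀ * S = -1) {R : Matrix l n ℝ} (hR : specNorm R ≤ 1)
    (X : Matrix n p ℝ) :
    ‖(X + Rᵀ * R * X * (A - 1)ᵀ) * Sᵀ‖ ^ 2 ≤ ‖X * Sᵀ‖ ^ 2 - ‖R * X‖ ^ 2 := by
  have hsplit : (X + Rᵀ * R * X * (A - 1)ᵀ) * Sᵀ
      = X * Sᵀ + Rᵀ * (R * X * (A - 1)ᵀ * Sᵀ) := by
    simp only [Matrix.add_mul, Matrix.mul_assoc]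
  have hsum : R * (X * Sᵀ) + R * X * (A - 1)ᵀ * Sᵀ = R * X * Aᵀ * Sᵀ := by
    rw [← Matrix.mul_assoc, ← Matrix.add_mul, transpose_sub, transpose_one, Matrix.mul_sub,
      Matrix.mul_one, add_sub_cancel]
  have hstep := frobenius_norm_add_transpose_mul_sq_le hR (X * Sᵀ) (R * X * (A - 1)ᵀ * Sᵀ)
  rw [hsum, frobenius_norm_sq_of_lyapunov hA, ← Matrix.mul_assoc R X] at hstep
  rw [hsplit]
  linarith

lemma sum_sq_le_lyapunov_sub {A : Matrix p p ℝ} {S : Matrix m p ℝ}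
    (hA : Aᵀ * (Sᵀ * S) * A - Sᵀ * S = -1) {R : ℕ → Matrix l n ℝ} (hR : ∀ k, specNorm (R k) ≤ 1)
    {X : ℕ → Matrix n p ℝ} (hX : ∀ k, X (k + 1) = X k + (R k)ᵀ * R k * X k * (A - 1)ᵀ) (N : ℕ) :
    ∑ k ∈ Finset.range N, ‖R k * X k‖ ^ 2 ≤ ‖X 0 * Sᵀ‖ ^ 2 - ‖X N * Sᵀ‖ ^ 2 := by
  rw [← Finset.sum_range_sub' fun k => ‖X k * Sᵀ‖ ^ 2]
  refine Finset.sum_le_sum fun k _ => ?_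
  rw [hX k]
  linarith [lyapunov_step hA (hR k) (X k)]

lemma mul_transpose_eq_zero_of_step {Λ J : Matrix p p ℝ} (hJΛ : J * Λ = J)
    {M : ℕ → Matrix n n ℝ} {X : ℕ → Matrix n p ℝ}
    (hX : ∀ k, X (k + 1) = X k + M k * X k * (Λ - 1)ᵀ) (hX0 : X 0 * Jᵀ = 0) (k : ℕ) :
    X k * Jᵀ = 0 := by
  have hBJ : (Λ - 1)ᵀ * Jᵀ = 0 := by
    rw [← transpose_mul, Matrix.mul_sub, hJΛ, Matrix.mul_one, sub_self, transpose_zero]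
  induction k with
  | zero => exact hX0
  | succ k ih =>
    rw [hX, Matrix.add_mul, ih, Matrix.mul_assoc _ _ Jᵀ, hBJ, Matrix.mul_zero, add_zero]

lemma lyapunov_contraction {Λ J : Matrix p p ℝ} {S : Matrix m p ℝ}
    (hA : (Λ - J)ᵀ * (Sᵀ * S) * (Λ - J) - Sᵀ * S = -1) (hJΛ : J * Λ = J)
    {R : ℕ → Matrix l n ℝ} (hR : ∀ k, specNorm (R k) ≤ 1) {X : ℕ → Matrix n p ℝ}
    (hX : ∀ k, X (k + 1) = X k + (R k)ᵀ * R k * X k * (Λ - 1)ᵀ) (hX0 : X 0 * Jᵀ = 0)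
    {ε : ℝ} (hε : 0 ≤ ε) {N : ℕ} (hN : 0 < N)
    (hRε : ε ≤ sigmaMin (∑ k ∈ Finset.range N, (R k)ᵀ * R k)) :
    ‖X N * Sᵀ‖ ^ 2 ≤ (1 - ε ^ 2 / N ^ 3 / (sigmaMax (Sᵀ * S) * max 1 (specNorm (Λ - 1) ^ 2)))
      * ‖X 0 * Sᵀ‖ ^ 2 := by
  have hXA (k : ℕ) : X (k + 1) = X k + (R k)ᵀ * R k * X k * (Λ - J - 1)ᵀ := by
    rw [hX, sub_right_comm, transpose_sub _ J, Matrix.mul_sub, Matrix.mul_assoc _ (X k) Jᵀ,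
      mul_transpose_eq_zero_of_step hJΛ hX hX0, Matrix.mul_zero, sub_zero]
  set T := ∑ k ∈ Finset.range N, ‖R k * X k‖ ^ 2
  have hdecrease : T ≤ ‖X 0 * Sᵀ‖ ^ 2 - ‖X N * Sᵀ‖ ^ 2 := sum_sq_le_lyapunov_sub hA hR hXA N
  have hexcite : ε ^ 2 / N ^ 3 * ‖X 0‖ ^ 2 ≤ max 1 (specNorm (Λ - 1) ^ 2) * T := by
    rw [div_mul_eq_mul_div, div_le_iff₀' (by positivity)]
    exact le_trans (by gcongr) (sq_sigmaMin_mul_le_sum_sq hR hX N)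
  have hσ : 0 ≤ sigmaMax (Sᵀ * S) := sigmaMax_nonneg _
  have hrate : ε ^ 2 / N ^ 3 / (sigmaMax (Sᵀ * S) * max 1 (specNorm (Λ - 1) ^ 2))
      * ‖X 0 * Sᵀ‖ ^ 2 ≤ T := by
    rw [div_mul_eq_mul_div]
    refine div_le_of_le_mul₀ (by positivity) (by positivity) ?_
    calc ε ^ 2 / N ^ 3 * ‖X 0 * Sᵀ‖ ^ 2
        ≤ ε ^ 2 / N ^ 3 * (sigmaMax (Sᵀ * S) * ‖X 0‖ ^ 2) := by
          gcongr
          exact frobenius_norm_mul_transpose_sq_le_sigmaMax S (X 0)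
      _ = sigmaMax (Sᵀ * S) * (ε ^ 2 / N ^ 3 * ‖X 0‖ ^ 2) := mul_left_comm _ _ _
      _ ≤ sigmaMax (Sᵀ * S) * (max 1 (specNorm (Λ - 1) ^ 2) * T) := by gcongr
      _ = T * (sigmaMax (Sᵀ * S) * max 1 (specNorm (Λ - 1) ^ 2)) := by ring
  rw [sub_mul, one_mul]
  linarith

end FrobeniusNorm

lemma deltaDT_le_sq_div_cube {n N : ℕ} {ε : ℝ} {Q : ℕ → Matrix (Fin n) (Fin n) ℝ}
    (hε : 0 ≤ ε) (hQ : ∀ k, specNorm (Q k) ≤ 1)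
    (hQε : ε ≤ sigmaMin (∑ k ∈ Finset.range N, Q k)) :
    deltaDT n ε N ≤ ε ^ 2 / N ^ 3 := by
  rcases n.eq_zero_or_pos with rfl | hn
  · simp only [deltaDT, Nat.cast_zero, zero_pow four_ne_zero, mul_zero, div_zero]
    positivity
  rcases N.eq_zero_or_pos with rfl | hN
  · simp [deltaDT]
  have hεN : ε ≤ N := by
    have : NeZero n := ⟨hn.ne'⟩
    calc ε ≤ specNorm (∑ k ∈ Finset.range N, Q k) := hQε.trans (sigmaMin_le_specNorm _)
      _ ≤ ∑ k ∈ Finset.range N, specNorm (Q k) := specNorm_sum_le _ _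
      _ ≤ N := by simpa using Finset.sum_le_sum fun k (_ : k ∈ Finset.range N) => hQ k
  have hN1 : (1 : ℝ) ≤ N := Nat.one_le_cast.2 hN
  have hn1 : (1 : ℝ) ≤ n := Nat.one_le_cast.2 hn
  have hden : (1 : ℝ) ≤ 16 * N ^ 3 * n ^ 4 := by
    nlinarith [one_le_pow₀ hN1 (n := 3), one_le_pow₀ hn1 (n := 4)]
  calc deltaDT n ε N = ε ^ 2 / N ^ 3 * ((ε / N) ^ 2 * (1 / (16 * N ^ 3 * n ^ 4))) := by
        rw [deltaDT]; field_simp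
    _ ≤ ε ^ 2 / N ^ 3 * (1 ^ 2 * 1) := by
        gcongr
        · exact div_le_one_of_le₀ hεN N.cast_nonneg
        · exact div_le_one_of_le₀ hden (by positivity)
    _ = ε ^ 2 / N ^ 3 := by ring

theorem stmt15_general {p n : Type*} [Fintype p] [DecidableEq p] [Fintype n] [DecidableEq n]
    {ε : ℝ} (hε : 0 ≤ ε) {N : ℕ} (hN : 0 < N)
    {Λ J : Matrix p p ℝ} (hΛJ : Λ * J = J) (hJΛ : J * Λ = J) (hJ : IsIdempotentElem J)
    {Ω : Matrix p p ℝ} (hΩ : Ω.PosSemidef) (hlyap : (Λ - J)ᵀ * Ω * (Λ - J) - Ω = -1)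
    {V : (p × n → ℝ) → ℝ} (hV : ∀ z, V z = z ⬝ᵥ ((Ω ⊗ₖ (1 : Matrix n n ℝ)) *ᵥ z))
    {Q : ℕ → Matrix n n ℝ} (hQ : ∀ k, (Q k).PosSemidef) (hQ1 : ∀ k, specNorm (Q k) ≤ 1)
    (hQε : ε ≤ sigmaMin (∑ k ∈ Finset.range N, Q k))
    {x : ℕ → p × n → ℝ} (hx : ∀ k, x (k + 1) = (1 + (Λ - 1) ⊗ₖ Q k) *ᵥ x k)
    {xbar : p × n → ℝ} (hxbar : xbar = (J ⊗ₖ (1 : Matrix n n ℝ)) *ᵥ x 0) :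
    V (x N - xbar)
      ≤ (1 - ε ^ 2 / N ^ 3 / (sigmaMax Ω * max 1 (specNorm (Λ - 1) ^ 2))) * V (x 0 - xbar) := by
  obtain ⟨S, rfl⟩ := exists_eq_transpose_mul_self_of_posSemidef hΩ
  choose R hR using fun k => exists_eq_transpose_mul_self_of_posSemidef (hQ k)
  obtain rfl : Q = fun k => (R k)ᵀ * R k := funext hR
  choose X hX using fun k => vec_bijective.surjective (x k)
  have hE (k : ℕ) : x k - xbar = vec (X k - X 0 * Jᵀ) := by
    rw [hxbar, ← hX, ← hX, kronecker_mulVec_vec, Matrix.one_mul, vec_sub]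
  have hXstep (k : ℕ) : X (k + 1) = X k + (R k)ᵀ * R k * X k * (Λ - 1)ᵀ := by
    rw [← vec_inj, hX, hx, ← hX, add_mulVec, one_mulVec, kronecker_mulVec_vec, vec_add]
  have hJB : Jᵀ * (Λ - 1)ᵀ = 0 := by
    rw [← transpose_mul, Matrix.sub_mul, hΛJ, Matrix.one_mul, sub_self, transpose_zero]
  simp only [hV, hE, dotProduct_kronecker_one_mulVec_vec]
  refine lyapunov_contraction (X := fun k => X k - X 0 * Jᵀ) hlyap hJΛ
    (fun k => specNorm_le_one_of_transpose_mul_self (hQ1 k)) (fun k => ?_) ?_ hε hN hQε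
  · rw [hXstep, Matrix.mul_assoc _ (_ - _), Matrix.sub_mul, Matrix.mul_assoc (X 0), hJB,
      Matrix.mul_zero, sub_zero, ← Matrix.mul_assoc, add_sub_right_comm]
  · rw [Matrix.sub_mul, Matrix.mul_assoc, ← transpose_mul, hJ.eq, sub_self]

theorem stmt15 {p n : ℕ} (ε : ℝ) (hε : 0 < ε) (N : ℕ) (hN : 1 ≤ N)
    (Λ : Matrix (Fin p) (Fin p) ℝ)
    (hΛ : IsInterconnectionDT Λ) (hconn : ConnectedMat Λ)
    (r : Fin p → ℝ) (hr1 : Matrix.vecMul r Λ = r) (hr2 : ∑ i, r i = 1)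
    (Ω : Matrix (Fin p) (Fin p) ℝ) (hΩs : Ω.IsSymm) (hΩpd : Ω.PosDef)
    (hlyap : (Λ - vecMulVec (fun _ => (1 : ℝ)) r)ᵀ * Ω * (Λ - vecMulVec (fun _ => (1 : ℝ)) r) - Ω
        = -1)
    (V : ((Fin p × Fin n) → ℝ) → ℝ)
    (hV : ∀ z, V z = z ⬝ᵥ ((Ω ⊗ₖ (1 : Matrix (Fin n) (Fin n) ℝ)).mulVec z))
    (Q : ℕ → Matrix (Fin n) (Fin n) ℝ)
    (hQ : ∀ k, InQbar (Q k))
    (hQε : ε ≤ sigmaMin (∑ k ∈ Finset.range N, Q k))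
    (x : ℕ → (Fin p × Fin n) → ℝ)
    (hx : ∀ k : ℕ, x (k + 1)
      = ((1 : Matrix (Fin p × Fin n) (Fin p × Fin n) ℝ) + (Λ - 1) ⊗ₖ Q k).mulVec (x k))
    (xbar : (Fin p × Fin n) → ℝ)
    (hxbar : xbar = ((vecMulVec (fun _ => (1 : ℝ)) r) ⊗ₖ (1 : Matrix (Fin n) (Fin n) ℝ)).mulVec (x 0)) :
    V (x N - xbar)
      ≤ (1 - deltaDT n ε N / (sigmaMax Ω * max 1 (specNorm (Λ - 1) ^ 2))) * V (x 0 - xbar) := by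
  have hΛ1 : Λ *ᵥ (fun _ => 1) = fun _ => 1 := by
    simpa [funext_iff, mulVec, dotProduct] using hΛ.2
  have hr : r ⬝ᵥ (fun _ => 1) = 1 := by simpa [dotProduct] using hr2
  have hdecay := stmt15_general hε.le hN (by rw [mul_vecMulVec, hΛ1]) (by rw [vecMulVec_mul, hr1])
    (by rw [IsIdempotentElem, vecMulVec_mul_vecMulVec, hr, one_smul]) hΩpd.posSemidef hlyap hV
    (fun k => (hQ k).1) (fun k => (hQ k).2) hQε hx hxbar
  have hV0 : 0 ≤ V (x 0 - xbar) :=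
    hV _ ▸ (hΩpd.posSemidef.kronecker PosSemidef.one).dotProduct_mulVec_nonneg _
  have hσ : 0 ≤ sigmaMax Ω := sigmaMax_nonneg Ω
  refine hdecay.trans ?_
  gcongr
  exact deltaDT_le_sq_div_cube hε.le (fun k => (hQ k).2) hQε
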